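/- (Main theorem on dependence on parameters.) Assume A1, A2 and A3. For any fixed u ∈ L_M there exists at least one solution x of problem (P_u) with J_u(x) = inf_{y∈E} J_u(y). Moreover, let {u_n} ⊂ L_M be a sequence of parameters converging to ū ∈ L_M (i.e. u_n(k) → ū(k) for each k), and for each n let x_n ∈ E satisfy J_{u_n}(x_n) = inf_{y∈E} J_{u_n}(y) (so that x_n solves (P_{u_n})). Then there exist a subsequence {x_{n_i}} and an element x̄ ∈ E such that x_{n_i} → x̄ in E, J_{ū}(x̄) = inf_{y∈E} J_{ū}(y), and x̄ solves problem (P_ū): p(k+1)(x̄(k+1) − x̄(k)) − p(k)(x̄(k) − x̄(k−1)) + f(k,x̄(k),ū(k)) = g(k) for k = 1,...,T, with x̄(0) = x̄(T+1) = 0. -/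

import Mathlib

/-!
The proof is the direct method in finite dimension, carried out uniformly in the parameter.
The sign condition makes `s ↦ F(k,s,v)` non-increasing away from zero for `|s| ≥ α`, so `F` is
bounded above uniformly in `|v| ≤ M` (`Fint_bound`). Since `|x(k)| ≤ ∑ |x(j) - x(j-1)|` on `E`,
the quadratic part of the action dominates its linear part, and the sublevel sets
`{J_u ≤ 0}` all lie in one cube (`apriori_bound`). Every minimizer satisfies `J_u(x) ≤ J_u(0) = 0`,
so it lies in this compact cube; as `(u, x) ↦ J_u(x)` is jointly continuous (`continuous_J`),
this yields both the existence of minimizers and, after extraction of a subsequence, the passage to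
the limit in `J_{u_n}(x_n) ≤ J_{u_n}(y)`. A minimizer solves the difference equation because the
derivative of `J_u` in each coordinate direction vanishes (`solves_of_minimizer`).

Two normalizations remove irrelevant values: `clampF` replaces `f` by a function continuous on the
whole plane that agrees with `f` for `|v| ≤ M`, and `trunc` sets sequences to zero outside
`{1,…,T}`, so that the cube is compact in the product topology of `ℕ → ℝ`.
-/

open Finset Filter Topology

/-- Membership in the space `E` of functions `x : {0,…,T+1} → ℝ` with zero boundary values. -/
def inE (T : ℕ) (x : ℕ → ℝ) : Prop := x 0 = 0 ∧ x (T + 1) = 0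

/-- The norm `‖x‖ = (∑_{k=1}^{T} (x(k+1) − x(k))²)^{1/2}` on `E`. -/
noncomputable def normE (T : ℕ) (x : ℕ → ℝ) : ℝ :=
  Real.sqrt (∑ k ∈ Finset.Icc 1 T, (x (k + 1) - x k) ^ 2)

/-- The Euclidean norm `|x| = (∑_{k=1}^{T} x(k)²)^{1/2}`. -/
noncomputable def euclE (T : ℕ) (x : ℕ → ℝ) : ℝ :=
  Real.sqrt (∑ k ∈ Finset.Icc 1 T, (x k) ^ 2)

/-- Membership in the parameter set `L_M`. -/
def inLM (T : ℕ) (M : ℝ) (u : ℕ → ℝ) : Prop :=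
  ∀ k ∈ Finset.Icc 1 T, |u k| ≤ M

/-- `F(k,s,v) = ∫₀^s f(k,t,v) dt`. -/
noncomputable def Fint (f : ℕ → ℝ → ℝ → ℝ) (k : ℕ) (s v : ℝ) : ℝ :=
  ∫ t in (0:ℝ)..s, f k t v

/-- The action functional `J_u`. -/
noncomputable def J (T : ℕ) (p g : ℕ → ℝ) (f : ℕ → ℝ → ℝ → ℝ) (u x : ℕ → ℝ) : ℝ :=
  (∑ k ∈ Finset.Icc 1 (T + 1), p k / 2 * (x k - x (k - 1)) ^ 2)
    - (∑ k ∈ Finset.Icc 1 T, Fint f k (x k) (u k))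
    + ∑ k ∈ Finset.Icc 1 T, g k * x k

/-- `x` solves problem `(P_u)`. -/
def SolvesP (T : ℕ) (p g : ℕ → ℝ) (f : ℕ → ℝ → ℝ → ℝ) (u x : ℕ → ℝ) : Prop :=
  inE T x ∧ ∀ k ∈ Finset.Icc 1 T,
    p (k + 1) * (x (k + 1) - x k) - p k * (x k - x (k - 1)) + f k (x k) (u k) = g k

/-- Assumption A1: `f(k,·,·)` continuous on `ℝ × [−M,M]` for each `k = 1,…,T`. -/
def A1 (T : ℕ) (M : ℝ) (f : ℕ → ℝ → ℝ → ℝ) : Prop :=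
  ∀ k ∈ Finset.Icc 1 T,
    ContinuousOn (fun q : ℝ × ℝ => f k q.1 q.2) (Set.univ ×ˢ Set.Icc (-M) M)

/-- Assumption A2. -/
def A2 (T : ℕ) (M : ℝ) (f : ℕ → ℝ → ℝ → ℝ) : Prop :=
  ∃ α > 0, ∀ k ∈ Finset.Icc 1 T, ∀ y v : ℝ, α ≤ |y| → |v| ≤ M → y * f k y v ≤ 0

/-- `m = min_{1≤k≤T+1} p(k)`. -/
noncomputable def mmin (T : ℕ) (p : ℕ → ℝ) : ℝ :=
  (Finset.Icc 1 (T + 1)).inf' (Finset.nonempty_Icc.mpr (Nat.le_add_left 1 T)) p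

/-- Assumption A3: `m = min_{1≤k≤T+1} p(k) > 0`. -/
def A3 (T : ℕ) (p : ℕ → ℝ) : Prop := 0 < mmin T p

/-- Assumption A5. -/
def A5 (T : ℕ) (M : ℝ) (f : ℕ → ℝ → ℝ → ℝ) (g : ℕ → ℝ) : Prop :=
  (∀ k ∈ Finset.Icc 1 T, ∀ y v : ℝ, |v| ≤ M → 0 ≤ f k y v - g k) ∧
    ∃ k₁ ∈ Finset.Icc 1 T, ∀ y v : ℝ, |v| ≤ M → 0 < f k₁ y v - g k₁

/-! ### Normalization and compactness -/

/-- Extension of `f(k,·,·)` from `ℝ × [-M,M]` to the plane, constant in `v` beyond `±M`; it is zero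
for `k ∉ {1,…,T}`. -/
noncomputable def clampF (T : ℕ) (M : ℝ) (f : ℕ → ℝ → ℝ → ℝ) (k : ℕ) (y v : ℝ) : ℝ :=
  if k ∈ Finset.Icc 1 T then f k y (max (-M) (min v M)) else 0

/-- The sequence `x` set to zero outside `{1,…,T}`. -/
noncomputable def trunc (T : ℕ) (x : ℕ → ℝ) (k : ℕ) : ℝ :=
  if k ∈ Finset.Icc 1 T then x k else 0

/-- The sequences bounded by `R` on `{1,…,T}` and zero elsewhere. -/
def cube (T : ℕ) (R : ℝ) : Set (ℕ → ℝ) :=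
  Set.univ.pi fun k => if k ∈ Finset.Icc 1 T then Set.Icc (-R) R else {0}

lemma isCompact_cube (T : ℕ) (R : ℝ) : IsCompact (cube T R) := by
  refine isCompact_univ_pi fun k => ?_
  split_ifs
  · exact isCompact_Icc
  · exact isCompact_singleton

lemma trunc_inE (T : ℕ) (x : ℕ → ℝ) : inE T (trunc T x) := by
  constructor <;> simp [trunc]

lemma trunc_mem_cube {T : ℕ} {R : ℝ} {x : ℕ → ℝ} (h : ∀ k ∈ Finset.Icc 1 T, |x k| ≤ R) :
    trunc T x ∈ cube T R := by
  intro k _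
  by_cases hk : k ∈ Finset.Icc 1 T
  · simp only [trunc, if_pos hk]
    exact abs_le.1 (h k hk)
  · simp only [trunc, if_neg hk, Set.mem_singleton_iff]

lemma cube_inE {T : ℕ} {R : ℝ} {x : ℕ → ℝ} (h : x ∈ cube T R) : inE T x := by
  have h0 := h 0 trivial
  have h1 := h (T + 1) trivial
  simp at h0 h1
  exact ⟨h0, h1⟩

lemma trunc_eq {T : ℕ} {x : ℕ → ℝ} (hx : inE T x) {k : ℕ} (hk : k ≤ T + 1) :
    trunc T x k = x k := by
  rcases Nat.eq_zero_or_pos k with rfl | h0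
  · rw [(trunc_inE T x).1, hx.1]
  rcases eq_or_lt_of_le hk with rfl | h1
  · rw [(trunc_inE T x).2, hx.2]
  · exact if_pos (Finset.mem_Icc.2 ⟨h0, by omega⟩)

lemma continuous_clampF {T : ℕ} {M : ℝ} (hM : 0 < M) {f : ℕ → ℝ → ℝ → ℝ} (hA1 : A1 T M f)
    (k : ℕ) : Continuous (fun q : ℝ × ℝ => clampF T M f k q.1 q.2) := by
  by_cases hk : k ∈ Finset.Icc 1 T
  · simp only [clampF, if_pos hk]
    refine (hA1 k hk).comp_continuous
      (f := fun q : ℝ × ℝ => (q.1, max (-M) (min q.2 M))) (by fun_prop) fun q => ?_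
    exact ⟨trivial, le_max_left _ _, max_le (by linarith) (min_le_right _ _)⟩
  · simp only [clampF, if_neg hk]
    exact continuous_const

lemma clampF_eq {T : ℕ} {M : ℝ} {f : ℕ → ℝ → ℝ → ℝ} {k : ℕ} (hk : k ∈ Finset.Icc 1 T)
    {v : ℝ} (hv : |v| ≤ M) (y : ℝ) : clampF T M f k y v = f k y v := by
  have := abs_le.1 hv
  rw [clampF, if_pos hk, min_eq_left this.2, max_eq_right this.1]

/-! ### Continuity of the action -/

lemma J_congr {T : ℕ} {p g : ℕ → ℝ} {f h : ℕ → ℝ → ℝ → ℝ} {u w x z : ℕ → ℝ}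
    (hf : ∀ k ∈ Finset.Icc 1 T, ∀ y, f k y (u k) = h k y (w k))
    (hx : ∀ k ≤ T + 1, x k = z k) : J T p g f u x = J T p g h w z := by
  unfold J
  congr 1
  · congr 1
    · refine Finset.sum_congr rfl fun k hk => ?_
      have := Finset.mem_Icc.1 hk
      rw [hx k this.2, hx (k - 1) (by omega)]
    · refine Finset.sum_congr rfl fun k hk => ?_
      have := Finset.mem_Icc.1 hk
      rw [hx k (by omega)]
      simp only [Fint, hf k hk]
  · refine Finset.sum_congr rfl fun k hk => ?_
    have := Finset.mem_Icc.1 hk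
    rw [hx k (by omega)]

lemma J_zero (T : ℕ) (p g : ℕ → ℝ) (f : ℕ → ℝ → ℝ → ℝ) (u : ℕ → ℝ) :
    J T p g f u (fun _ => 0) = 0 := by
  simp [J, Fint]

lemma continuous_Fint {h : ℕ → ℝ → ℝ → ℝ} {k : ℕ}
    (hc : Continuous (fun q : ℝ × ℝ => h k q.1 q.2)) :
    Continuous (fun q : ℝ × ℝ => Fint h k q.1 q.2) := by
  unfold Fint
  apply intervalIntegral.continuous_parametric_intervalIntegral_of_continuous
    (f := fun (q : ℝ × ℝ) t => h k t q.2)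
  · exact hc.comp (f := fun r : (ℝ × ℝ) × ℝ => (r.2, r.1.2)) (by fun_prop)
  · exact continuous_fst

lemma continuous_J {T : ℕ} {p g : ℕ → ℝ} {h : ℕ → ℝ → ℝ → ℝ}
    (hc : ∀ k, Continuous (fun q : ℝ × ℝ => h k q.1 q.2)) :
    Continuous (fun q : (ℕ → ℝ) × (ℕ → ℝ) => J T p g h q.1 q.2) := by
  unfold J
  refine ((continuous_finsetSum _ fun k _ => by fun_prop).sub
    (continuous_finsetSum _ fun k _ => ?_)).add (continuous_finsetSum _ fun k _ => by fun_prop)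
  exact (continuous_Fint (hc k)).comp
    (f := fun q : (ℕ → ℝ) × (ℕ → ℝ) => (q.2 k, q.1 k)) (by fun_prop)

/-! ### Uniform coercivity -/

/-- On the compact set `|s| ≤ α`, `|v| ≤ M` continuity gives the bound; beyond `±α` the sign
condition shows that `F(k,s,v)` does not exceed its value at `±α`. -/
lemma Fint_bound {h : ℕ → ℝ → ℝ → ℝ} {k : ℕ} {M α : ℝ}
    (hc : Continuous (fun q : ℝ × ℝ => h k q.1 q.2)) (hα : 0 < α)
    (hs : ∀ y v : ℝ, α ≤ |y| → |v| ≤ M → y * h k y v ≤ 0) :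
    ∃ C : ℝ, ∀ s v : ℝ, |v| ≤ M → Fint h k s v ≤ C := by
  obtain ⟨C, hC⟩ := ((isCompact_Icc (a := -α) (b := α)).prod
    (isCompact_Icc (a := -M) (b := M))).exists_bound_of_continuousOn
    (continuous_Fint hc).continuousOn
  have hin : ∀ s v : ℝ, |s| ≤ α → |v| ≤ M → Fint h k s v ≤ C := fun s v h1 h2 =>
    (le_abs_self _).trans (hC (s, v) ⟨abs_le.1 h1, abs_le.1 h2⟩)
  refine ⟨C, fun s v hv => ?_⟩
  have hcv : Continuous fun t => h k t v :=
    hc.comp (f := fun t : ℝ => (t, v)) (by fun_prop)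
  have hadd : ∀ a : ℝ, Fint h k s v = Fint h k a v + ∫ t in a..s, h k t v := fun a =>
    (intervalIntegral.integral_add_adjacent_intervals
      (hcv.intervalIntegrable _ _) (hcv.intervalIntegrable _ _)).symm
  rcases le_or_gt |s| α with h1 | h1
  · exact hin s v h1 hv
  rcases lt_abs.1 h1 with h2 | h2
  · have h3 := hin α v (abs_of_pos hα).le hv
    have h4 : ∫ t in α..s, h k t v ≤ ∫ t in α..s, (0 : ℝ) := by
      refine intervalIntegral.integral_mono_on h2.le (hcv.intervalIntegrable _ _)
        (by simp) fun t ht => ?_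
      have := hs t v (ht.1.trans (le_abs_self t)) hv
      have ht0 : 0 < t := hα.trans_le ht.1
      by_contra! hlt
      nlinarith [mul_pos ht0 hlt]
    have := hadd α
    simp at h4
    linarith
  · have h3 := hin (-α) v (by rw [abs_neg, abs_of_pos hα]) hv
    have h4 : 0 ≤ ∫ t in s..(-α), h k t v := by
      refine intervalIntegral.integral_nonneg (by linarith) fun t ht => ?_
      have := hs t v (le_abs.2 (Or.inr (by linarith [ht.2]))) hv
      have ht0 : t < 0 := by linarith [ht.2]
      by_contra! hlt
      nlinarith [mul_pos_of_neg_of_neg ht0 hlt]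
    have := hadd (-α)
    rw [intervalIntegral.integral_symm] at this
    linarith

lemma abs_le_sum_diff {T : ℕ} {x : ℕ → ℝ} (hx : x 0 = 0) {k : ℕ} (hk : k ≤ T + 1) :
    |x k| ≤ ∑ j ∈ Finset.Icc 1 (T + 1), |x j - x (j - 1)| := by
  have h1 : ∀ n : ℕ, |x n| ≤ ∑ j ∈ Finset.Icc 1 n, |x j - x (j - 1)| := by
    intro n
    induction n with
    | zero => simp [hx]
    | succ n ih =>
      rw [Finset.sum_Icc_succ_top (by omega)]
      have := abs_add_le (x n) (x (n + 1) - x n)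
      rw [add_sub_cancel] at this
      simp only [Nat.add_sub_cancel]
      linarith
  exact (h1 k).trans (Finset.sum_le_sum_of_subset_of_nonneg
    (Finset.Icc_subset_Icc le_rfl hk) fun _ _ _ => abs_nonneg _)

/-- Coercivity of the action, uniform in the parameter: one radius serves for all `u ∈ L_M`. -/
lemma apriori_bound {T : ℕ} {M m : ℝ} {p g : ℕ → ℝ} {h : ℕ → ℝ → ℝ → ℝ} (hm : 0 < m)
    (hp : ∀ k ∈ Finset.Icc 1 (T + 1), m ≤ p k)
    (hF : ∀ k ∈ Finset.Icc 1 T, ∃ C : ℝ, ∀ s v : ℝ, |v| ≤ M → Fint h k s v ≤ C) :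
    ∃ R : ℝ, ∀ u x : ℕ → ℝ, inLM T M u → inE T x → J T p g h u x ≤ 0 →
      ∀ k ∈ Finset.Icc 1 T, |x k| ≤ R := by
  choose! C hC using hF
  set G := ∑ k ∈ Finset.Icc 1 T, |g k| with hG
  set B := ∑ k ∈ Finset.Icc 1 T, |C k| with hB
  have hG0 : 0 ≤ G := Finset.sum_nonneg fun _ _ => abs_nonneg _
  have hB0 : 0 ≤ B := Finset.sum_nonneg fun _ _ => abs_nonneg _
  set a := m / (2 * (T + 1)) with ha
  have ha0 : 0 < a := by positivity
  refine ⟨(G + B) / a + 1, fun u x hu hx hJ k hk => ?_⟩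
  set D := ∑ j ∈ Finset.Icc 1 (T + 1), |x j - x (j - 1)| with hD
  have hxD : ∀ j ≤ T + 1, |x j| ≤ D := fun j hj => abs_le_sum_diff hx.1 hj
  refine (hxD k (by have := (Finset.mem_Icc.1 hk).2; omega)).trans ?_
  have hquad : a * D ^ 2 ≤ ∑ k ∈ Finset.Icc 1 (T + 1), p k / 2 * (x k - x (k - 1)) ^ 2 := by
    -- Cauchy–Schwarz against the constant sequence
    have h1 : D ^ 2 ≤ ((T : ℝ) + 1) * ∑ k ∈ Finset.Icc 1 (T + 1), (x k - x (k - 1)) ^ 2 := by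
      have := sq_sum_le_card_mul_sum_sq (s := Finset.Icc 1 (T + 1))
        (f := fun j => |x j - x (j - 1)|)
      simpa using this
    have h2 : m / 2 * ∑ k ∈ Finset.Icc 1 (T + 1), (x k - x (k - 1)) ^ 2 ≤
        ∑ k ∈ Finset.Icc 1 (T + 1), p k / 2 * (x k - x (k - 1)) ^ 2 := by
      rw [Finset.mul_sum]
      refine Finset.sum_le_sum fun j hj => ?_
      have := hp j hj
      gcongr
    refine le_trans ?_ h2
    calc a * D ^ 2 ≤ a * (((T : ℝ) + 1) * ∑ k ∈ Finset.Icc 1 (T + 1), (x k - x (k - 1)) ^ 2) := by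
          gcongr
      _ = _ := by rw [ha]; field_simp
  have hFs : ∑ k ∈ Finset.Icc 1 T, Fint h k (x k) (u k) ≤ B :=
    Finset.sum_le_sum fun j hj => (hC j hj _ _ (hu j hj)).trans (le_abs_self _)
  have hgs : -(G * D) ≤ ∑ k ∈ Finset.Icc 1 T, g k * x k := by
    rw [hG, Finset.sum_mul, ← Finset.sum_neg_distrib]
    refine Finset.sum_le_sum fun j hj => ?_
    have h1 : |g j| * |x j| ≤ |g j| * D := by
      have := hxD j (by have := (Finset.mem_Icc.1 hj).2; omega)
      gcongr
    have h2 := neg_abs_le (g j * x j)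
    rw [abs_mul] at h2
    linarith
  have hle : a * D ^ 2 ≤ G * D + B := by
    unfold J at hJ
    linarith
  by_contra! hlt
  have hD1 : 1 < D := by
    have : 0 ≤ (G + B) / a := by positivity
    linarith
  have haD : G + B < a * D := by
    have : (G + B) / a < D := by linarith
    rwa [div_lt_iff₀' ha0] at this
  nlinarith [mul_lt_mul_of_pos_right haD (by linarith : (0 : ℝ) < D),
    mul_nonneg hB0 (sub_nonneg.2 hD1.le)]

/-! ### The Euler–Lagrange equation -/

/-- Fermat's rule along the `k`-th coordinate direction. -/
lemma solves_of_minimizer {T : ℕ} {p g : ℕ → ℝ} {h : ℕ → ℝ → ℝ → ℝ} {u x : ℕ → ℝ}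
    (hc : ∀ k, Continuous (fun q : ℝ × ℝ => h k q.1 q.2)) (hx : inE T x)
    (hmin : ∀ y : ℕ → ℝ, inE T y → J T p g h u x ≤ J T p g h u y) :
    SolvesP T p g h u x := by
  refine ⟨hx, fun k hk => ?_⟩
  have hk' := Finset.mem_Icc.1 hk
  set e : ℕ → ℝ := fun j => if j = k then 1 else 0 with he
  have he0 : e 0 = 0 := if_neg (by omega)
  have heT : e (T + 1) = 0 := if_neg (by omega)
  have hz : ∀ j, HasDerivAt (fun t : ℝ => x j + t * e j) (e j) 0 := fun j => by
    simpa using ((hasDerivAt_id (0 : ℝ)).mul_const (e j)).const_add (x j)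
  have hder : HasDerivAt (fun t : ℝ => J T p g h u (fun j => x j + t * e j))
      ((∑ j ∈ Finset.Icc 1 (T + 1), p j * (x j - x (j - 1)) * (e j - e (j - 1)))
        - (∑ j ∈ Finset.Icc 1 T, h j (x j) (u j) * e j)
        + ∑ j ∈ Finset.Icc 1 T, g j * e j) 0 := by
    unfold J
    refine ((HasDerivAt.fun_sum fun j _ => ?_).sub (HasDerivAt.fun_sum fun j _ => ?_)).add
      (HasDerivAt.fun_sum fun j _ => (hz j).const_mul (g j))
    · refine ((((hz j).sub (hz (j - 1))).pow 2).const_mul (p j / 2)).congr_deriv ?_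
      simp
      ring
    · have hcj : Continuous fun t => h j t (u j) :=
        (hc j).comp (f := fun t : ℝ => (t, u j)) (by fun_prop)
      have h1 : HasDerivAt (fun s => Fint h j s (u j)) (h j (x j) (u j)) (x j + 0 * e j) := by
        rw [zero_mul, add_zero]
        exact (hcj.integral_hasStrictDerivAt 0 (x j)).hasDerivAt
      exact h1.comp (0 : ℝ) (hz j)
  have hloc : IsLocalMin (fun t : ℝ => J T p g h u (fun j => x j + t * e j)) 0 := by
    refine Filter.Eventually.of_forall fun t => ?_
    simpa using hmin (fun j => x j + t * e j) ⟨by simp [he0, hx.1], by simp [heT, hx.2]⟩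
  have h0 := hloc.hasDerivAt_eq_zero hder
  have s1 : ∑ j ∈ Finset.Icc 1 (T + 1), p j * (x j - x (j - 1)) * e j
      = p k * (x k - x (k - 1)) := by
    rw [Finset.sum_eq_single_of_mem k (Finset.mem_Icc.2 ⟨hk'.1, by omega⟩)
      fun j _ hj => by simp [he, hj]]
    simp [he]
  have s2 : ∑ j ∈ Finset.Icc 1 (T + 1), p j * (x j - x (j - 1)) * e (j - 1)
      = p (k + 1) * (x (k + 1) - x k) := by
    rw [Finset.sum_eq_single_of_mem (k + 1) (Finset.mem_Icc.2 ⟨by omega, by omega⟩)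
      fun j hj hjk => ?_]
    · simp [he]
    · have := Finset.mem_Icc.1 hj
      have : j - 1 ≠ k := by omega
      simp [he, this]
  have s3 : ∀ c : ℕ → ℝ, ∑ j ∈ Finset.Icc 1 T, c j * e j = c k := fun c => by
    rw [Finset.sum_eq_single_of_mem k hk fun j _ hj => by simp [he, hj]]
    simp [he]
  simp only [mul_sub (_ * _) (e _) (e _), Finset.sum_sub_distrib] at h0
  rw [s1, s2, s3 (fun j => h j (x j) (u j)), s3 g] at h0
  linarith

/-! ### Existence and dependence on parameters -/

/-- main theorem on dependence on parameters: under A1–A3, for every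
`u ∈ L_M` problem `(P_u)` has a solution minimizing `J_u` over `E`; moreover, for any
sequence of parameters `u_n → ū` in `L_M` and minimizers `x_n` of `J_{u_n}`, some
subsequence `x_{n_i}` converges to some `x̄ ∈ E` which minimizes `J_ū` and solves `(P_ū)`. -/
theorem dep_param_theo (T : ℕ) (hT : 1 ≤ T) (M : ℝ) (hM : 0 < M)
    (f : ℕ → ℝ → ℝ → ℝ) (p g : ℕ → ℝ)
    (hA1 : A1 T M f) (hA2 : A2 T M f) (hA3 : A3 T p) :
    (∀ u : ℕ → ℝ, inLM T M u → ∃ x : ℕ → ℝ,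
      (∀ y : ℕ → ℝ, inE T y → J T p g f u x ≤ J T p g f u y) ∧ SolvesP T p g f u x) ∧
    (∀ (un : ℕ → ℕ → ℝ) (ub : ℕ → ℝ),
      (∀ n, inLM T M (un n)) → inLM T M ub →
      (∀ k ∈ Finset.Icc 1 T, Tendsto (fun n => un n k) atTop (𝓝 (ub k))) →
      ∀ xn : ℕ → ℕ → ℝ,
        (∀ n, inE T (xn n) ∧
          ∀ y : ℕ → ℝ, inE T y → J T p g f (un n) (xn n) ≤ J T p g f (un n) y) →
        ∃ φ : ℕ → ℕ, StrictMono φ ∧ ∃ xb : ℕ → ℝ, inE T xb ∧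
          (∀ k ∈ Finset.Icc 1 T, Tendsto (fun i => xn (φ i) k) atTop (𝓝 (xb k))) ∧
          (∀ y : ℕ → ℝ, inE T y → J T p g f ub xb ≤ J T p g f ub y) ∧
          SolvesP T p g f ub xb) := by
  obtain ⟨α, hα, hs⟩ := hA2
  set h := clampF T M f with hh
  have hc : ∀ k, Continuous (fun q : ℝ × ℝ => h k q.1 q.2) := continuous_clampF hM hA1
  have hJ : ∀ u x, inLM T M u → J T p g f u x = J T p g h u x := fun u x hu =>
    J_congr (fun k hk y => (clampF_eq hk (hu k hk) y).symm) fun _ _ => rfl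
  have htr : ∀ u x, inE T x → J T p g h u (trunc T x) = J T p g h u x := fun u x hx =>
    J_congr (fun _ _ _ => rfl) fun _ hk => trunc_eq hx hk
  obtain ⟨R, hR⟩ := apriori_bound (g := g) (h := h) (M := M) hA3
    (fun k hk => Finset.inf'_le p hk)
    (fun k hk => Fint_bound (hc k) hα fun y v hy hv => by
      rw [hh, clampF_eq hk hv]; exact hs k hk y v hy hv)
  have hsolve : ∀ u x, inLM T M u → inE T x →
      (∀ y, inE T y → J T p g f u x ≤ J T p g f u y) → SolvesP T p g f u x := by
    intro u x hu hx hmin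
    obtain ⟨h1, h2⟩ := solves_of_minimizer (u := u) hc hx fun y hy => by
      rw [← hJ u x hu, ← hJ u y hu]; exact hmin y hy
    refine ⟨h1, fun k hk => ?_⟩
    rw [← clampF_eq (f := f) hk (hu k hk)]
    exact h2 k hk
  have hE0 : inE T (fun _ => 0) := ⟨rfl, rfl⟩
  refine ⟨fun u hu => ?_, fun un ub hun hub hlim xn hxn => ?_⟩
  · have hcu : Continuous fun x => J T p g h u x :=
      (continuous_J hc).comp (f := fun x : ℕ → ℝ => (u, x)) (by fun_prop)
    have hmem : ∀ y, inE T y → J T p g h u y ≤ 0 → trunc T y ∈ cube T R := fun y hy hy0 =>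
      trunc_mem_cube (hR u y hu hy hy0)
    have h00 := hmem _ hE0 (J_zero T p g h u).le
    obtain ⟨x, hxK, hx⟩ := (isCompact_cube T R).exists_isMinOn ⟨_, h00⟩ hcu.continuousOn
    have hxmin : ∀ y, inE T y → J T p g h u x ≤ J T p g h u y := by
      intro y hy
      rcases le_total (J T p g h u y) 0 with h1 | h1
      · rw [← htr u y hy]
        exact hx (hmem y hy h1)
      · refine le_trans ?_ h1
        rw [← J_zero T p g h u, ← htr u _ hE0]
        exact hx h00
    have hxmin' : ∀ y, inE T y → J T p g f u x ≤ J T p g f u y := fun y hy => by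
      rw [hJ u x hu, hJ u y hu]; exact hxmin y hy
    exact ⟨x, hxmin', hsolve u x hu (cube_inE hxK) hxmin'⟩
  · have hmem : ∀ n, trunc T (xn n) ∈ cube T R := fun n => by
      refine trunc_mem_cube (hR (un n) (xn n) (hun n) (hxn n).1 ?_)
      rw [← hJ _ _ (hun n), ← J_zero T p g f (un n)]
      exact (hxn n).2 _ hE0
    obtain ⟨xb, hxb, φ, hφ, hconv⟩ := (isCompact_cube T R).tendsto_subseq hmem
    -- the parameters are only known to converge on `{1,…,T}`, hence their truncation
    have hulim : Tendsto (fun n => trunc T (un n)) atTop (𝓝 (trunc T ub)) := by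
      rw [tendsto_pi_nhds]
      intro k
      by_cases hk : k ∈ Finset.Icc 1 T
      · simpa only [trunc, if_pos hk] using hlim k hk
      · simp only [trunc, if_neg hk, tendsto_const_nhds]
    have htu : ∀ u x, J T p g h (trunc T u) x = J T p g h u x := fun u x =>
      J_congr (fun k hk y => by rw [trunc, if_pos hk]) fun _ _ => rfl
    have hxbmin : ∀ y, inE T y → J T p g f ub xb ≤ J T p g f ub y := by
      intro y hy
      have l1 := ((continuous_J (T := T) (p := p) (g := g) hc).tendsto (trunc T ub, xb)).comp
        ((hulim.comp hφ.tendsto_atTop).prodMk_nhds hconv)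
      have l2 := ((continuous_J (T := T) (p := p) (g := g) hc).tendsto (trunc T ub, y)).comp
        ((hulim.comp hφ.tendsto_atTop).prodMk_nhds (tendsto_const_nhds (x := y)))
      have := le_of_tendsto_of_tendsto' l1 l2 fun i => by
        simp only [Function.comp, htu, htr _ _ (hxn (φ i)).1]
        rw [← hJ _ _ (hun _), ← hJ _ _ (hun _)]
        exact (hxn (φ i)).2 y hy
      simpa only [htu, ← hJ _ _ hub] using this
    refine ⟨φ, hφ, xb, cube_inE hxb, fun k hk => ?_, hxbmin,
      hsolve ub xb hub (cube_inE hxb) hxbmin⟩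
    have := tendsto_pi_nhds.1 hconv k
    simpa only [Function.comp, trunc, if_pos hk] using this
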